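/- Let ε ∈ (0,1) be irrational with continued fraction expansion ε = [0; a_1, a_2, …], let ℓ satisfy max{ε, 1−ε} < ℓ < 1, and let x0 ∈ [0,ℓ). Then the 3iet word u_{ε,ℓ,x0} has finite index, ind(u_{ε,ℓ,x0}) < +∞, if and only if the sequence of partial quotients (a_n)_{n≥1} is bounded. -/

import Mathlib

/-!
The map `T_{ε,ℓ}` is the first-return map to `[0,ℓ)` of the rotation `R : x ↦ x - ε mod 1`; a step
coded by `B` takes two rotation steps, every other step takes one. Both implications compare
repetitions in the word with small values of `‖qε‖`, and these are controlled by the partial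
quotients through the convergents of `ε` (`best_approx`, `qq_mul_err`, `badly_approximable`).

*Bounded partial quotients give finite index.* Then `|qε - s| ≥ c/q` for all `q ≥ 1`. If `w^k` with
`|w| = p` occurs at position `i`, the points `y_{i+ap}`, `a < k`, form an arithmetic progression
whose difference has the form `P - qε` with `p ≤ q ≤ 2p`, hence has absolute value at least
`c/(2p)`. Its first and last term are coded alike for `p` steps, so the interval between them
meets no point `tε` mod `1` with `t ≤ p` (`floor_agree`). By Dirichlet's theorem and the lower
bound on `|qε - s|` these points are `O(1/p)`-dense (`gap_bound`), which bounds `k`.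

*Unbounded partial quotients give infinite index.* Let `q < Q` be the denominators of consecutive
convergents and `δ = ‖qε‖`. In rotation time, the coding at time `t + q` differs from the one at
time `t` only if `R^t x₀` lies in a half-open interval of length `δ` at one of four
thresholds. Two such times for the same threshold differ by at least `Q`, since
`‖tε‖ ≥ δ` for `0 < t < Q`. So there are at most four such times in `[0, Q)`, and some window of
length about `Q/5` has none (`exists_good_window`); there the coding has period `q`. Passing
back to the time of the induced map only costs a factor two (`exists_repetition`), so the exponent
of the repetition is at least of order `Q/q`, which is at least the partial quotient.
-/

/-- The alphabet of 3iet words. -/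
inductive L3 | A | B | C
deriving DecidableEq, Inhabited

/-- The three-interval exchange transformation `T_{ε,ℓ}`. -/
noncomputable def T3 (ε ℓ : ℝ) (x : ℝ) : ℝ :=
  if x < ℓ - 1 + ε then x + 1 - ε
  else if x < ε then x + 1 - 2*ε
  else x - ε

/-- The 3iet word `u_{ε,ℓ,x0}` coding the orbit of `x0` under `T_{ε,ℓ}`. -/
noncomputable def u3 (ε ℓ x0 : ℝ) (n : ℕ) : L3 :=
  if (T3 ε ℓ)^[n] x0 < ℓ - 1 + ε then L3.A
  else if (T3 ε ℓ)^[n] x0 < ε then L3.B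
  else L3.C

/-- The two-interval exchange transformation `T_ε`. -/
noncomputable def T2 (ε : ℝ) (x : ℝ) : ℝ := if x < ε then x + 1 - ε else x - ε

/-- The Sturmian word `u_{ε,x0}` of slope `ε` coding the orbit of `x0` under `T_ε`
(letter `0` is `false`, letter `1` is `true`). -/
noncomputable def u2 (ε x0 : ℝ) (n : ℕ) : Bool := if (T2 ε)^[n] x0 < ε then false else true

/-- `w` is a factor of the infinite word `u`. -/
def IsFactor {α : Type*} (w : List α) (u : ℕ → α) : Prop :=
  ∃ i : ℕ, w = (List.range w.length).map fun j => u (i + j)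

/-- The prefix of length `m` of the periodic infinite word `www⋯`;
for `|w| ≤ m` this is the fractional power `w^{m/|w|}`. -/
def powPrefix {α : Type*} [Inhabited α] (w : List α) (m : ℕ) : List α :=
  (List.range m).map fun j => w.getD (j % w.length) default

/-- The index of the factor `w` in the infinite word `u`:
`sup {r ∈ ℚ, r ≥ 1, r|w| ∈ ℕ | w^r is a factor of u}`, as an element of `ℝ ∪ {+∞}`. -/
noncomputable def factorIndex {α : Type*} [Inhabited α] (u : ℕ → α) (w : List α) : EReal :=
  sSup {x : EReal | ∃ m : ℕ, w.length ≤ m ∧ IsFactor (powPrefix w m) u ∧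
    x = (((m : ℝ) / (w.length : ℝ) : ℝ) : EReal)}

/-- The index of the infinite word `u`: `sup {ind(w) | w a nonempty factor of u}`. -/
noncomputable def wordIndex {α : Type*} [Inhabited α] (u : ℕ → α) : EReal :=
  sSup {x : EReal | ∃ w : List α, w ≠ [] ∧ IsFactor w u ∧ x = factorIndex u w}

/-- The Gauss map `x ↦ {1/x}`. -/
noncomputable def gaussMap (x : ℝ) : ℝ := Int.fract x⁻¹

/-- `cfa ε n` is the partial quotient `a_{n+1}` of the continued fraction
expansion `ε = [0; a₁, a₂, a₃, …]` of the irrational `ε ∈ (0,1)`. -/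
noncomputable def cfa (ε : ℝ) (n : ℕ) : ℕ := ⌊(gaussMap^[n] ε)⁻¹⌋₊

/-- The morphism `σ01 : A ↦ 0, B ↦ 01, C ↦ 1`. -/
def sigma01 : L3 → List Bool
  | L3.A => [false]
  | L3.B => [false, true]
  | L3.C => [true]

/-- The morphism `σ10 : A ↦ 0, B ↦ 10, C ↦ 1`. -/
def sigma10 : L3 → List Bool
  | L3.A => [false]
  | L3.B => [true, false]
  | L3.C => [true]

/-- The image `φ(u₀)φ(u₁)φ(u₂)⋯` of an infinite word `u` under a (nonerasing) morphism `φ`. -/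
def morphWord (φ : L3 → List Bool) (u : ℕ → L3) (m : ℕ) : Bool :=
  ((List.range (m+1)).flatMap fun k => φ (u k)).getD m false

/-- `u` is a uniformly recurrent infinite word: every factor occurs infinitely often
with bounded gaps (every window of some length `R` contains an occurrence). -/
def UniformlyRecurrent {α : Type*} (u : ℕ → α) : Prop :=
  ∀ w : List α, IsFactor w u → ∃ R : ℕ, ∀ i : ℕ, ∃ j : ℕ, i ≤ j ∧ j < i + R ∧
    w = (List.range w.length).map fun t => u (j + t)

/-- `u` is eventually periodic. -/
def EventuallyPeriodic {α : Type*} (u : ℕ → α) : Prop :=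
  ∃ N p : ℕ, 0 < p ∧ ∀ n : ℕ, N ≤ n → u (n + p) = u n

/-- The standard words of `ε = [0; a₁, a₂, …]`, with the index shifted by one:
`sw ε 0 = s₋₁ = 1`, `sw ε 1 = s₀ = 0`, `sw ε 2 = s₁ = s₀^{a₁-1} s₋₁`, and
`sw ε (n+3) = s_{n+2} = s_{n+1}^{a_{n+2}} s_n`. -/
noncomputable def sw (ε : ℝ) : ℕ → List Bool
  | 0 => [true]
  | 1 => [false]
  | 2 => (List.replicate (cfa ε 0 - 1) ([false] : List Bool)).flatten ++ [true]
  | (n+3) => (List.replicate (cfa ε (n+1)) (sw ε (n+2))).flatten ++ sw ε (n+1)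

/-- Denominators of the convergents of `ε`, shifted by one: `qq ε 0 = q₋₁ = 0`,
`qq ε 1 = q₀ = 1`, and `qq ε (n+2) = q_{n+1} = a_{n+1} q_n + q_{n-1}`. -/
noncomputable def qq (ε : ℝ) : ℕ → ℕ
  | 0 => 0
  | 1 => 1
  | (n+2) => cfa ε n * qq ε (n+1) + qq ε n

/-- `u` is a 3iet word. -/
def Is3ietWord (u : ℕ → L3) : Prop :=
  ∃ ε ℓ x0 : ℝ, Irrational ε ∧ 0 < ε ∧ ε < 1 ∧ max ε (1 - ε) < ℓ ∧ ℓ < 1 ∧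
    x0 ∈ Set.Ico 0 ℓ ∧ u = u3 ε ℓ x0

/-- `v` is a Sturmian word. -/
def IsSturmianWord (v : ℕ → Bool) : Prop :=
  ∃ ε x0 : ℝ, Irrational ε ∧ 0 < ε ∧ ε < 1 ∧ x0 ∈ Set.Ico (0:ℝ) 1 ∧ v = u2 ε x0

/-- The infinite binary word `v1` is amicable with `v2` (`v1 ∝ v2`). -/
def AmicableInf (v1 v2 : ℕ → Bool) : Prop :=
  ∃ w : ℕ → L3, v1 = morphWord sigma01 w ∧ v2 = morphWord sigma10 w

/-- The morphism `Φ_k : A ↦ 0, B ↦ 01^{k+1}, C ↦ 01^k`. -/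
def Phi (k : ℕ) : L3 → List Bool
  | L3.A => [false]
  | L3.B => false :: List.replicate (k+1) true
  | L3.C => false :: List.replicate k true

/-- The infinite word `B₀B₁B₂⋯` obtained by concatenating the sequence of
(nonempty) blocks `B`. -/
def concatOfBlocks (B : ℕ → List Bool) (m : ℕ) : Bool :=
  ((List.range (m+1)).flatMap B).getD m false

/-! ### Convergents of `ε` -/

lemma gauss_props {ε : ℝ} (hirr : Irrational ε) (h0 : 0 < ε) (h1 : ε < 1) (n : ℕ) :
    Irrational (gaussMap^[n] ε) ∧ 0 < gaussMap^[n] ε ∧ gaussMap^[n] ε < 1 := by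
  induction n with
  | zero => exact ⟨hirr, h0, h1⟩
  | succ n ih =>
    obtain ⟨i1, i2, i3⟩ := ih
    rw [Function.iterate_succ_apply']
    have hi : Irrational (gaussMap (gaussMap^[n] ε)) := by
      unfold gaussMap Int.fract
      exact (irrational_inv_iff.mpr i1).sub_intCast _
    refine ⟨hi, ?_, Int.fract_lt_one _⟩
    exact lt_of_le_of_ne (Int.fract_nonneg _) (Ne.symm hi.ne_zero)

lemma gauss_step {ε : ℝ} (hirr : Irrational ε) (h0 : 0 < ε) (h1 : ε < 1) (n : ℕ) :
    gaussMap^[n] ε * gaussMap^[n+1] ε = 1 - (cfa ε n : ℝ) * gaussMap^[n] ε := by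
  obtain ⟨-, i2, -⟩ := gauss_props hirr h0 h1 n
  rw [Function.iterate_succ_apply']
  have hc : (cfa ε n : ℝ) = (⌊(gaussMap^[n] ε)⁻¹⌋ : ℝ) := by
    unfold cfa
    exact natCast_floor_eq_intCast_floor (inv_pos.mpr i2).le
  rw [hc]
  set x := gaussMap^[n] ε
  unfold gaussMap Int.fract
  have : x * x⁻¹ = 1 := mul_inv_cancel₀ i2.ne'
  linear_combination this

lemma one_le_cfa {ε : ℝ} (hirr : Irrational ε) (h0 : 0 < ε) (h1 : ε < 1) (n : ℕ) :
    1 ≤ cfa ε n := by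
  obtain ⟨-, i2, i3⟩ := gauss_props hirr h0 h1 n
  unfold cfa
  rw [Nat.one_le_floor_iff]
  exact (one_le_inv₀ i2).mpr i3.le

/-- Numerators of the convergents of `ε`, with the index shift of `qq`. -/
noncomputable def pp (ε : ℝ) : ℕ → ℤ
  | 0 => 1
  | 1 => 0
  | (n+2) => (cfa ε n : ℤ) * pp ε (n+1) + pp ε n

/-- The approximation error `|q_{n-1} ε - p_{n-1}|`, as the product of the first `n` iterates of
`ε` under the Gauss map. -/
noncomputable def err (ε : ℝ) : ℕ → ℝ
  | 0 => 1
  | (n+1) => err ε n * gaussMap^[n] ε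

lemma err_pos {ε : ℝ} (hirr : Irrational ε) (h0 : 0 < ε) (h1 : ε < 1)
    (n : ℕ) : 0 < err ε n := by
  induction n with
  | zero => simp [err]
  | succ n ih => exact mul_pos ih (gauss_props hirr h0 h1 n).2.1

lemma err_anti {ε : ℝ} (hirr : Irrational ε) (h0 : 0 < ε) (h1 : ε < 1)
    (n : ℕ) : err ε (n+1) < err ε n := by
  have := err_pos hirr h0 h1 n
  have h := (gauss_props hirr h0 h1 n).2.2
  simp only [err]
  nlinarith

lemma err_rec {ε : ℝ} (hirr : Irrational ε) (h0 : 0 < ε) (h1 : ε < 1)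
    (n : ℕ) : err ε (n+2) = err ε n - cfa ε n * err ε (n+1) := by
  have := gauss_step hirr h0 h1 n
  simp only [err]
  linear_combination (err ε n) * this

lemma err_succ_lt_one {ε : ℝ} (hirr : Irrational ε) (h0 : 0 < ε) (h1 : ε < 1)
    (n : ℕ) : err ε (n+1) < 1 := by
  induction n with
  | zero => simpa [err] using err_anti hirr h0 h1 0
  | succ n ih => exact (err_anti hirr h0 h1 (n+1)).trans ih

lemma qq_mul_sub_pp {ε : ℝ} (hirr : Irrational ε) (h0 : 0 < ε) (h1 : ε < 1)
    (n : ℕ) : (qq ε n : ℝ) * ε - pp ε n = (-1)^(n+1) * err ε n := by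
  induction n using Nat.twoStepInduction with
  | zero => simp [qq, pp, err]
  | one => simp [qq, pp, err]
  | more n ih1 ih2 =>
    rw [err_rec hirr h0 h1]
    simp only [qq, pp]
    push_cast
    linear_combination (cfa ε n : ℝ) * ih2 + ih1

lemma qq_pp_det {ε : ℝ}
    (n : ℕ) : (qq ε (n+1) : ℤ) * pp ε n - qq ε n * pp ε (n+1) = (-1)^n := by
  induction n with
  | zero => simp [qq, pp]
  | succ n ih =>
    simp only [qq, pp]
    push_cast
    rw [pow_succ, ← ih]
    ring

lemma qq_mul_err {ε : ℝ} (hirr : Irrational ε) (h0 : 0 < ε) (h1 : ε < 1)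
    (n : ℕ) :
    (qq ε (n+1) : ℝ) * err ε n + qq ε n * err ε (n+1) = 1 := by
  induction n with
  | zero => simp [qq, err]
  | succ n ih =>
    rw [err_rec hirr h0 h1]
    simp only [qq]
    push_cast
    linear_combination ih

lemma qq_mono {ε : ℝ} (hirr : Irrational ε) (h0 : 0 < ε) (h1 : ε < 1)
    (n : ℕ) : qq ε n ≤ qq ε (n+1) := by
  cases n with
  | zero => simp [qq]
  | succ n =>
    simp only [qq]
    have := Nat.mul_le_mul_right (qq ε (n+1)) (one_le_cfa hirr h0 h1 n)
    omega

lemma qq_pos {ε : ℝ} (hirr : Irrational ε) (h0 : 0 < ε) (h1 : ε < 1)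
    (n : ℕ) : 1 ≤ qq ε (n+1) := by
  induction n with
  | zero => simp [qq]
  | succ n ih => exact ih.trans (qq_mono hirr h0 h1 (n+1))

lemma le_qq {ε : ℝ} (hirr : Irrational ε) (h0 : 0 < ε) (h1 : ε < 1)
    (n : ℕ) : n ≤ qq ε (n+1) := by
  induction n using Nat.twoStepInduction with
  | zero => simp
  | one => exact qq_pos hirr h0 h1 1
  | more n ih1 ih2 =>
    have h3 := qq_pos hirr h0 h1 n
    have h4 := Nat.mul_le_mul_right (qq ε (n+2)) (one_le_cfa hirr h0 h1 (n+1))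
    simp only [qq] at *
    omega

/-- Best approximation: `‖tε‖` does not drop below the error of a convergent before the
denominator of the next one. -/
lemma best_approx {ε : ℝ} (hirr : Irrational ε) (h0 : 0 < ε) (h1 : ε < 1)
    (n t : ℕ) (s : ℤ) (ht : 0 < t) (htq : t < qq ε (n+1)) :
    err ε n ≤ |(t : ℝ) * ε - s| := by
  have hdet := qq_pp_det (ε := ε) n
  have e1 := qq_mul_sub_pp hirr h0 h1 n
  have e2 := qq_mul_sub_pp hirr h0 h1 (n+1)
  have b1 := err_pos hirr h0 h1 n
  have b2 := err_pos hirr h0 h1 (n+1)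
  have hσ : ((-1 : ℤ)^n) * (-1)^n = 1 := by rw [← mul_pow]; simp
  -- coordinates of `(t, s)` in the unimodular basis of two consecutive convergents
  obtain ⟨x, y, hx, hy⟩ : ∃ x y : ℤ, (t : ℤ) = x * qq ε n + y * qq ε (n+1) ∧
      s = x * pp ε n + y * pp ε (n+1) := by
    refine ⟨(-1)^n * (s * qq ε (n+1) - t * pp ε (n+1)),
      (-1)^n * (t * pp ε n - s * qq ε n), ?_, ?_⟩
    · linear_combination (-(t : ℤ)) * hσ - ((-1)^n * (t : ℤ)) * hdet
    · linear_combination (-s) * hσ - ((-1)^n * s) * hdet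
  have hval : (t : ℝ) * ε - s = (-1)^(n+1) * (x * err ε n - y * err ε (n+1)) := by
    have hx' : (t : ℝ) = x * qq ε n + y * qq ε (n+1) := by exact_mod_cast hx
    have hy' : (s : ℝ) = x * pp ε n + y * pp ε (n+1) := by exact_mod_cast hy
    rw [hx', hy']
    linear_combination (x : ℝ) * e1 + (y : ℝ) * e2
  rw [hval, abs_mul, abs_pow, abs_neg, abs_one, one_pow, one_mul]
  have ht' : (0 : ℤ) < t := by exact_mod_cast ht
  have htq' : (t : ℤ) < qq ε (n+1) := by exact_mod_cast htq
  have hq0 : (0 : ℤ) ≤ qq ε n := by positivity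
  have hq1 : (0 : ℤ) < qq ε (n+1) := by omega
  rcases lt_trichotomy y 0 with hy0 | hy0 | hy0
  · have hx0 : 1 ≤ x := by
      by_contra hcon
      have : x ≤ 0 := by omega
      nlinarith
    have hxr : (1 : ℝ) ≤ x := by exact_mod_cast hx0
    have hyr : (y : ℝ) ≤ 0 := by exact_mod_cast hy0.le
    refine le_trans ?_ (le_abs_self _)
    nlinarith
  · have hx0 : x ≠ 0 := by
      rintro rfl
      subst hy0
      omega
    have hxr : (1 : ℝ) ≤ |(x : ℝ)| := by exact_mod_cast Int.one_le_abs hx0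
    subst hy0
    simp only [Int.cast_zero, zero_mul, sub_zero]
    rw [abs_mul, abs_of_pos b1]
    nlinarith
  · have hx0 : x ≤ -1 := by
      by_contra hcon
      have : 0 ≤ x := by omega
      nlinarith
    have hxr : (x : ℝ) ≤ -1 := by exact_mod_cast hx0
    have hyr : (0 : ℝ) ≤ y := by exact_mod_cast hy0.le
    refine le_trans ?_ (neg_le_abs _)
    nlinarith

lemma badly_approximable {ε : ℝ} (hirr : Irrational ε) (h0 : 0 < ε) (h1 : ε < 1)
    (K : ℕ) (hK : ∀ n, cfa ε n ≤ K) :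
    ∃ c : ℝ, 0 < c ∧ ∀ (q : ℕ) (s : ℤ), 0 < q → c / q ≤ |(q : ℝ) * ε - s| := by
  refine ⟨1 / (2 * (K + 1)), by positivity, fun q s hq => ?_⟩
  obtain ⟨n, hn1, hn2⟩ : ∃ n, qq ε (n+1) ≤ q ∧ q < qq ε (n+2) := by
    have hex : ∃ m, q < qq ε (m+1) := ⟨q+1, le_qq hirr h0 h1 (q+1)⟩
    classical
    have hs := Nat.find_spec hex
    have hm := fun j => Nat.find_min (m := j) hex
    rcases hf : Nat.find hex with _ | n
    · rw [hf] at hs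
      simp [qq] at hs
      omega
    · rw [hf] at hs hm
      exact ⟨n, not_lt.mp (hm n (by omega)), hs⟩
  refine le_trans ?_ (best_approx hirr h0 h1 (n+1) q s hq hn2)
  have hid := qq_mul_err hirr h0 h1 (n+1)
  have ha := (err_anti hirr h0 h1 (n+1)).le
  have hp := err_pos hirr h0 h1 (n+1)
  have hm : (qq ε (n+1) : ℝ) ≤ qq ε (n+2) := by exact_mod_cast qq_mono hirr h0 h1 (n+1)
  have hup : (qq ε (n+2) : ℝ) ≤ (K+1) * qq ε (n+1) := by
    have h2 := Nat.mul_le_mul_right (qq ε (n+1)) (hK n)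
    have h3 := qq_mono hirr h0 h1 n
    have : qq ε (n+2) ≤ (K+1) * qq ε (n+1) := by
      simp only [qq]
      nlinarith
    exact_mod_cast this
  have hqr : (qq ε (n+1) : ℝ) ≤ q := by exact_mod_cast hn1
  have hq' : (0 : ℝ) < q := by exact_mod_cast hq
  have hn : (0 : ℝ) ≤ qq ε (n+1) := by positivity
  have hle : 1 ≤ 2 * (qq ε (n+2) : ℝ) * err ε (n+1) := by
    have := mul_le_mul hm ha (err_pos hirr h0 h1 (n+2)).le (hn.trans hm)
    linarith
  have hle2 : (qq ε (n+2) : ℝ) ≤ (K+1) * q :=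
    hup.trans (mul_le_mul_of_nonneg_left hqr (by positivity))
  rw [div_div, div_le_iff₀ (by positivity)]
  nlinarith [mul_le_mul_of_nonneg_right hle2 hp.le]

/-- If `ε` is badly approximable, the points `tε` mod `1` with `t ≤ p` are `O(1/p)`-dense: an
interval whose endpoints have equal floors after each of these rotations has length `O(1/p)`. -/
lemma gap_bound {ε c : ℝ} (hc : 0 < c)
    (hbad : ∀ (q : ℕ) (s : ℤ), 0 < q → c / q ≤ |(q : ℝ) * ε - s|)
    {p : ℕ} (hp : 0 < p) {a b : ℝ}
    (hfl : ∀ t : ℕ, t ≤ p → ⌊a - t * ε⌋ = ⌊b - t * ε⌋) :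
    b - a ≤ 4 / (c * p) := by
  obtain ⟨r, hr1, hr2⟩ := Real.exists_rat_abs_sub_le_and_den_le ε hp
  have hd : (0 : ℝ) < r.den := by exact_mod_cast r.pos
  have hpr : (0 : ℝ) < p := by exact_mod_cast hp
  have hdp : (r.den : ℝ) ≤ p := by exact_mod_cast hr2
  have hrd : (r : ℝ) * r.den = r.num := by exact_mod_cast Rat.mul_den_eq_num r
  -- the denominator of the approximant is at least `c * p`
  have hden : c * p ≤ r.den := by
    have h2 := hbad r.den r.num r.pos
    have h3 : (r.den : ℝ) * ε - r.num = r.den * (ε - r) := by rw [← hrd]; ring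
    rw [h3, abs_mul, abs_of_pos hd] at h2
    have h4 : (r.den : ℝ) * |ε - r| ≤ 1 / (p + 1) := by
      calc (r.den : ℝ) * |ε - r| ≤ r.den * (1 / ((p + 1) * r.den)) := by gcongr
        _ = 1 / (p + 1) := by field_simp
    have h5 := h2.trans h4
    rw [div_le_div_iff₀ hd (by positivity)] at h5
    nlinarith
  refine le_trans ?_ (div_le_div_of_nonneg_left (by norm_num) (by positivity) hden)
  by_contra hcon
  push Not at hcon
  -- `r.num` is invertible modulo `r.den`, so some `t * r` is close to the midpoint modulo `1`
  set μ := (a + b) / 2 with hμ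
  set k := ⌊(r.den : ℝ) * μ⌋ with hk
  have hk1 := Int.floor_le ((r.den : ℝ) * μ)
  have hk2 := Int.lt_floor_add_one ((r.den : ℝ) * μ)
  rw [← hk] at hk1 hk2
  obtain ⟨t, m, ht, htm⟩ : ∃ (t : ℕ) (m : ℤ), t < r.den ∧ (t : ℤ) * r.num = k + m * r.den := by
    have hcop : IsCoprime r.num (r.den : ℤ) := by
      rw [Int.isCoprime_iff_nat_coprime]
      simpa using r.reduced
    obtain ⟨x, y, hxy⟩ := hcop
    have hdz : (0 : ℤ) < r.den := by exact_mod_cast r.pos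
    have e1 := Int.emod_nonneg (k * x) hdz.ne'
    have e2 := Int.emod_lt_of_pos (k * x) hdz
    have e3 := Int.emod_add_mul_ediv (k * x) r.den
    refine ⟨((k * x) % r.den).toNat, -(k * y) - ((k * x) / r.den) * r.num, by omega, ?_⟩
    rw [Int.toNat_of_nonneg e1]
    linear_combination r.num * e3 + k * hxy
  have htm' : (t : ℝ) * r = k / r.den + m := by
    have h : (t : ℝ) * r.num = k + m * r.den := by exact_mod_cast htm
    field_simp
    rw [← hrd] at h
    linarith
  have htd : (t : ℝ) ≤ r.den := by exact_mod_cast ht.le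
  have hclose : |(t : ℝ) * ε - t * r| ≤ 1 / r.den := by
    rw [← mul_sub, abs_mul, abs_of_nonneg (by positivity : (0 : ℝ) ≤ t)]
    calc (t : ℝ) * |ε - r| ≤ r.den * (1 / ((p + 1) * r.den)) := by gcongr
      _ = 1 / (p + 1) := by field_simp
      _ ≤ 1 / r.den := by gcongr; linarith
  have hk3 : (k : ℝ) / r.den ≤ μ := by
    rw [div_le_iff₀ hd]; linarith
  have hk4 : μ < (k : ℝ) / r.den + 1 / r.den := by
    rw [← add_div, lt_div_iff₀ hd]; linarith
  obtain ⟨c1, c2⟩ := abs_le.mp hclose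
  have h4 : (4 : ℝ) / r.den = 4 * (1 / r.den) := by ring
  have hp1 : (0 : ℝ) < 1 / r.den := by positivity
  have ha : a - t * ε < ((-m : ℤ) : ℝ) := by
    push_cast; linarith
  have hb : ((-m : ℤ) : ℝ) ≤ b - t * ε := by
    push_cast; linarith
  have f1 := Int.floor_lt.mpr ha
  have f2 := Int.le_floor.mpr hb
  have := hfl t (ht.le.trans hr2)
  omega

/-! ### Repetitions and the index -/

lemma getD_map_range {α : Type*} (m : ℕ) (f : ℕ → α) {j : ℕ} (hj : j < m) (d : α) :
    ((List.range m).map f).getD j d = f j := by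
  simp [List.getD, hj]

lemma le_wordIndex {α : Type*} [Inhabited α] (u : ℕ → α) (n p m : ℕ) (hp : 0 < p) (hpm : p ≤ m)
    (hper : ∀ j, j + p < m → u (n + j + p) = u (n + j)) :
    (((m : ℝ) / (p : ℝ) : ℝ) : EReal) ≤ wordIndex u := by
  set w : List α := (List.range p).map fun j => u (n + j) with hw
  have hlen : w.length = p := by simp [hw]
  have hmod : ∀ j, j < m → u (n + j % p) = u (n + j) := by
    intro j
    induction j using Nat.strong_induction_on with
    | _ j ih =>
      intro hj
      rcases lt_or_ge j p with h | h
      · rw [Nat.mod_eq_of_lt h]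
      · have h2 := ih (j - p) (by omega) (by omega)
        have h3 := hper (j - p) (by omega)
        rw [Nat.mod_eq_sub_mod h, h2, ← h3]
        congr 1
        omega
  have hwf : IsFactor w u := ⟨n, by rw [hlen]⟩
  have hne : w ≠ [] := by
    intro h
    rw [h] at hlen
    simp at hlen
    omega
  have hpf : IsFactor (powPrefix w m) u := by
    refine ⟨n, ?_⟩
    have hl : (powPrefix w m).length = m := by simp [powPrefix]
    rw [hl]
    unfold powPrefix
    apply List.map_congr_left
    intro j hj
    rw [List.mem_range] at hj
    rw [hlen, hw, getD_map_range _ _ (Nat.mod_lt _ hp)]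
    exact hmod j hj
  have h1 : (((m : ℝ) / (p : ℝ) : ℝ) : EReal) ≤ factorIndex u w :=
    le_sSup ⟨m, by omega, hpf, by rw [hlen]⟩
  exact h1.trans (le_sSup ⟨w, hne, hwf, rfl⟩)

lemma wordIndex_le {α : Type*} [Inhabited α] (u : ℕ → α) (C : ℝ)
    (h : ∀ n p m : ℕ, 0 < p → p ≤ m →
      (∀ j a : ℕ, a * p + j < m → u (n + a * p + j) = u (n + j)) → (m : ℝ) / p ≤ C) :
    wordIndex u ≤ (C : EReal) := by
  refine sSup_le ?_
  rintro _ ⟨w, hne, -, rfl⟩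
  refine sSup_le ?_
  rintro _ ⟨m, hm, ⟨i, hi⟩, rfl⟩
  rw [EReal.coe_le_coe_iff]
  have hl : (powPrefix w m).length = m := by simp [powPrefix]
  rw [hl] at hi
  have key : ∀ j, j < m → u (i + j) = w.getD (j % w.length) default := by
    intro j hj
    have h2 := congrArg (fun l => l.getD j default) hi
    simp only [powPrefix] at h2
    rw [getD_map_range _ _ hj, getD_map_range _ _ hj] at h2
    exact h2.symm
  refine h i w.length m (List.length_pos_iff.mpr hne) hm ?_
  intro j a hja
  rw [add_assoc, key _ hja, key j (lt_of_le_of_lt (Nat.le_add_left _ _) hja)]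
  congr 1
  rw [Nat.mul_add_mod_self_right]

/-! ### The orbit of `x0` -/

/-- The coding of a point of `[0, ℓ)` by the three intervals. -/
noncomputable def code3 (ε ℓ z : ℝ) : L3 :=
  if z < ℓ - 1 + ε then L3.A else if z < ε then L3.B else L3.C

/-- The rotation time of the `n`-th orbit point: `T_{ε,ℓ}` is the first-return map of the rotation
by `-ε` to `[0, ℓ)`, with return time `2` on `I_B` and `1` elsewhere. -/
noncomputable def rt (ε ℓ x0 : ℝ) : ℕ → ℕ
  | 0 => 0
  | (n+1) => rt ε ℓ x0 n + (if u3 ε ℓ x0 n = L3.B then 2 else 1)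

lemma u3_eq_code3 (ε ℓ x0 : ℝ) (n : ℕ) :
    u3 ε ℓ x0 n = code3 ε ℓ ((T3 ε ℓ)^[n] x0) := rfl

lemma orbit_step (ε ℓ x0 : ℝ) (n : ℕ) :
    (u3 ε ℓ x0 n = L3.A ∧ (T3 ε ℓ)^[n] x0 < ℓ - 1 + ε ∧
      (T3 ε ℓ)^[n+1] x0 = (T3 ε ℓ)^[n] x0 + 1 - ε) ∨
    (u3 ε ℓ x0 n = L3.B ∧ ℓ - 1 + ε ≤ (T3 ε ℓ)^[n] x0 ∧ (T3 ε ℓ)^[n] x0 < ε ∧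
      (T3 ε ℓ)^[n+1] x0 = (T3 ε ℓ)^[n] x0 + 1 - 2 * ε) ∨
    (u3 ε ℓ x0 n = L3.C ∧ ℓ - 1 + ε ≤ (T3 ε ℓ)^[n] x0 ∧ ε ≤ (T3 ε ℓ)^[n] x0 ∧
      (T3 ε ℓ)^[n+1] x0 = (T3 ε ℓ)^[n] x0 - ε) := by
  rw [Function.iterate_succ_apply']
  unfold u3
  set y := (T3 ε ℓ)^[n] x0
  unfold T3
  by_cases h : y < ℓ - 1 + ε
  · simp [h]
  · by_cases h' : y < ε
    · simp [h, h', not_lt.mp h]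
    · simp [h, h', not_lt.mp h, not_lt.mp h']

lemma orbit_mem {ε ℓ x0 : ℝ} (hlε : ε < ℓ) (hlε' : 1 - ε < ℓ) (hl1 : ℓ < 1)
    (hx0 : x0 ∈ Set.Ico 0 ℓ)
    (n : ℕ) : 0 ≤ (T3 ε ℓ)^[n] x0 ∧ (T3 ε ℓ)^[n] x0 < ℓ := by
  induction n with
  | zero => exact hx0
  | succ n ih =>
    obtain ⟨i1, i2⟩ := ih
    rcases orbit_step ε ℓ x0 n with ⟨-, a, b⟩ | ⟨-, a, a', b⟩ | ⟨-, a, a', b⟩ <;> rw [b] <;>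
      constructor <;> linarith

lemma orbit_eq_fract {ε ℓ x0 : ℝ} (hlε : ε < ℓ) (hlε' : 1 - ε < ℓ) (hl1 : ℓ < 1)
    (hx0 : x0 ∈ Set.Ico 0 ℓ)
    (n : ℕ) :
    (T3 ε ℓ)^[n] x0 = Int.fract (x0 - rt ε ℓ x0 n * ε) := by
  have hmem := orbit_mem hlε hlε' hl1 hx0
  have hex : ∃ k : ℤ, (T3 ε ℓ)^[n] x0 = x0 - rt ε ℓ x0 n * ε - k := by
    induction n with
    | zero => exact ⟨0, by simp [rt]⟩
    | succ n ih =>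
      obtain ⟨k, hk⟩ := ih
      rcases orbit_step ε ℓ x0 n with ⟨c, -, b⟩ | ⟨c, -, -, b⟩ | ⟨c, -, -, b⟩
      · refine ⟨k - 1, ?_⟩
        rw [b, hk]; simp [rt, c]; ring
      · refine ⟨k - 1, ?_⟩
        rw [b, hk]; simp [rt, c]; ring
      · refine ⟨k, ?_⟩
        rw [b, hk]; simp [rt, c]; ring
  obtain ⟨k, hk⟩ := hex
  have := hmem n
  symm
  rw [Int.fract_eq_iff]
  exact ⟨this.1, this.2.trans hl1, k, by rw [hk]; ring⟩

lemma rt_succ_bounds {ε ℓ x0 : ℝ}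
    (n : ℕ) :
    rt ε ℓ x0 n + 1 ≤ rt ε ℓ x0 (n+1) ∧ rt ε ℓ x0 (n+1) ≤ rt ε ℓ x0 n + 2 := by
  simp only [rt]
  split_ifs <;> omega

lemma rt_add_bounds {ε ℓ x0 : ℝ}
    (n j : ℕ) :
    rt ε ℓ x0 n + j ≤ rt ε ℓ x0 (n+j) ∧ rt ε ℓ x0 (n+j) ≤ rt ε ℓ x0 n + 2 * j := by
  induction j with
  | zero => simp
  | succ j ih =>
    have := rt_succ_bounds (ε := ε) (ℓ := ℓ) (x0 := x0) (n+j)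
    rw [show n + (j + 1) = n + j + 1 by ring]
    constructor <;> omega

lemma exists_rt_between {ε ℓ x0 : ℝ}
    (t : ℕ) : ∃ n, rt ε ℓ x0 n ≤ t ∧ t < rt ε ℓ x0 (n+1) := by
  have hex : ∃ m, t < rt ε ℓ x0 m := by
    refine ⟨t + 1, ?_⟩
    have := (rt_add_bounds (ε := ε) (ℓ := ℓ) (x0 := x0) 0 (t+1)).1
    rw [Nat.zero_add] at this
    omega
  classical
  have hs := Nat.find_spec hex
  have hm := fun j => Nat.find_min (m := j) hex
  rcases hf : Nat.find hex with _ | n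
  · rw [hf] at hs
    simp [rt] at hs
  · rw [hf] at hs hm
    exact ⟨n, not_lt.mp (hm n (by omega)), hs⟩

/-- Every visit of the rotation orbit to `[0, ℓ)` is recorded by the induced orbit. -/
lemma exists_rt_eq {ε ℓ x0 : ℝ} (hlε : ε < ℓ) (hlε' : 1 - ε < ℓ) (hl1 : ℓ < 1)
    (hx0 : x0 ∈ Set.Ico 0 ℓ)
    (t : ℕ) (ht : Int.fract (x0 - t * ε) < ℓ) : ∃ n, rt ε ℓ x0 n = t := by
  obtain ⟨n, hn1, hn2⟩ := exists_rt_between (ε := ε) (ℓ := ℓ) (x0 := x0) t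
  rcases hn1.eq_or_lt with h | h
  · exact ⟨n, h⟩
  exfalso
  have hB : u3 ε ℓ x0 n = L3.B := by
    by_contra hne
    simp only [rt, hne, if_false] at hn2
    omega
  have ht' : t = rt ε ℓ x0 n + 1 := by
    simp only [rt, hB, if_true] at hn2
    omega
  have hy := orbit_eq_fract hlε hlε' hl1 hx0 n
  rcases orbit_step ε ℓ x0 n with ⟨c, -, b⟩ | ⟨c, a, a', b⟩ | ⟨c, -, -, b⟩
  · rw [hB] at c; cases c
  · have hfr : Int.fract (x0 - t * ε) = (T3 ε ℓ)^[n] x0 + 1 - ε := by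
      rw [Int.fract_eq_iff]
      refine ⟨by linarith, by linarith, ⌊x0 - rt ε ℓ x0 n * ε⌋ - 1, ?_⟩
      rw [hy, Int.fract, ht']
      push_cast
      ring
    rw [hfr] at ht
    linarith
  · rw [hB] at c; cases c

/-- If two orbit points are coded alike for `p` steps, then no rotation by `-tε` with `t ≤ p`
separates them by an integer. -/
lemma floor_agree {ε ℓ x0 : ℝ} (hlε : ε < ℓ) (hlε' : 1 - ε < ℓ) (hl1 : ℓ < 1)
    (hx0 : x0 ∈ Set.Ico 0 ℓ)
    (p : ℕ) : ∀ n n' : ℕ, (∀ j, j < p → u3 ε ℓ x0 (n+j) = u3 ε ℓ x0 (n'+j)) →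
    ∀ t : ℕ, t ≤ p → ⌊(T3 ε ℓ)^[n] x0 - t * ε⌋ = ⌊(T3 ε ℓ)^[n'] x0 - t * ε⌋ := by
  have hmem := orbit_mem hlε hlε' hl1 hx0
  have hzero : ∀ n, ⌊(T3 ε ℓ)^[n] x0 - (0 : ℕ) * ε⌋ = 0 := by
    intro n
    have := hmem n
    rw [Int.floor_eq_iff]
    push_cast
    constructor <;> linarith
  induction p with
  | zero =>
    intro n n' _ t ht
    obtain rfl : t = 0 := by omega
    rw [hzero, hzero]
  | succ p ih =>
    intro n n' hj t ht
    have hshift : ∀ j, j < p → u3 ε ℓ x0 (n + 1 + j) = u3 ε ℓ x0 (n' + 1 + j) := by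
      intro j hjp
      have := hj (j+1) (by omega)
      rwa [show n + 1 + j = n + (j+1) by ring, show n' + 1 + j = n' + (j+1) by ring]
    have hrec := ih (n+1) (n'+1) hshift
    have hfirst := hj 0 (by omega)
    simp only [add_zero] at hfirst
    have m1 := hmem n
    have m2 := hmem n'
    rcases t with _ | t
    · rw [hzero, hzero]
    rcases orbit_step ε ℓ x0 n with ⟨c, a, b⟩ | ⟨c, a, a', b⟩ | ⟨c, a, a', b⟩ <;>
    rcases orbit_step ε ℓ x0 n' with ⟨d, e, f⟩ | ⟨d, e, e', f⟩ | ⟨d, e, e', f⟩ <;>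
    first
    | (rw [c, d] at hfirst; cases hfirst; done)
    | skip
    · have r := hrec t (by omega)
      rw [b, f] at r
      have g : ∀ y : ℝ, y - ((t + 1 : ℕ) : ℝ) * ε = (y + 1 - ε - t * ε) - (1 : ℤ) := by
        intro y; push_cast; ring
      rw [g, g, Int.floor_sub_intCast, Int.floor_sub_intCast, r]
    · rcases t with _ | t
      · have g : ∀ y : ℝ, 0 ≤ y → y < ε → ⌊y - ((0 + 1 : ℕ) : ℝ) * ε⌋ = -1 := by
          intro y hy0 hy1
          rw [Int.floor_eq_iff]
          push_cast
          constructor <;> linarith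
        rw [g _ m1.1 a', g _ m2.1 e']
      · have r := hrec t (by omega)
        rw [b, f] at r
        have g : ∀ y : ℝ, y - ((t + 1 + 1 : ℕ) : ℝ) * ε = (y + 1 - 2 * ε - t * ε) - (1 : ℤ) := by
          intro y; push_cast; ring
        rw [g, g, Int.floor_sub_intCast, Int.floor_sub_intCast, r]
    · have r := hrec t (by omega)
      rw [b, f] at r
      have g : ∀ y : ℝ, y - ((t + 1 : ℕ) : ℝ) * ε = (y - ε - t * ε) := by
        intro y; push_cast; ring
      rw [g, g, r]

lemma displacement_form {ε ℓ x0 : ℝ}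
    (n p : ℕ) : ∃ (P : ℤ) (q : ℕ), p ≤ q ∧ q ≤ 2 * p ∧
    (T3 ε ℓ)^[n+p] x0 - (T3 ε ℓ)^[n] x0 = P - q * ε := by
  induction p with
  | zero => exact ⟨0, 0, by simp⟩
  | succ p ih =>
    obtain ⟨P, q, hq1, hq2, h⟩ := ih
    rw [← add_assoc]
    rcases orbit_step ε ℓ x0 (n+p) with ⟨-, -, b⟩ | ⟨-, -, -, b⟩ | ⟨-, -, -, b⟩
    · exact ⟨P + 1, q + 1, by omega, by omega, by rw [b]; push_cast; linear_combination h⟩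
    · exact ⟨P + 1, q + 2, by omega, by omega, by rw [b]; push_cast; linear_combination h⟩
    · exact ⟨P, q + 1, by omega, by omega, by rw [b]; push_cast; linear_combination h⟩

lemma displacement_congr {ε ℓ x0 : ℝ}
    (n n' p : ℕ)
    (h : ∀ j, j < p → u3 ε ℓ x0 (n+j) = u3 ε ℓ x0 (n'+j)) :
    (T3 ε ℓ)^[n+p] x0 - (T3 ε ℓ)^[n] x0 = (T3 ε ℓ)^[n'+p] x0 - (T3 ε ℓ)^[n'] x0 := by
  induction p with
  | zero => simp
  | succ p ih =>
    have ih' := ih (fun j hj => h j (by omega))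
    have hp := h p (by omega)
    rw [← add_assoc, ← add_assoc]
    rcases orbit_step ε ℓ x0 (n+p) with ⟨c, -, b⟩ | ⟨c, -, -, b⟩ | ⟨c, -, -, b⟩ <;>
    rcases orbit_step ε ℓ x0 (n'+p) with ⟨d, -, f⟩ | ⟨d, -, -, f⟩ | ⟨d, -, -, f⟩ <;>
    first
    | (rw [c, d] at hp; cases hp; done)
    | (rw [b, f]; linear_combination ih')

/-- For badly approximable `ε`, the exponent of a repetition in the 3iet word is bounded in terms of
the approximation constant `c`. -/
lemma power_bound {ε ℓ x0 : ℝ} (hlε : ε < ℓ) (hlε' : 1 - ε < ℓ) (hl1 : ℓ < 1)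
    (hx0 : x0 ∈ Set.Ico 0 ℓ)
    {c : ℝ} (hc : 0 < c)
    (hbad : ∀ (q : ℕ) (s : ℤ), 0 < q → c / q ≤ |(q : ℝ) * ε - s|)
    (n p m : ℕ) (hp : 0 < p) (hpm : p ≤ m)
    (hper : ∀ j a : ℕ, a * p + j < m → u3 ε ℓ x0 (n + a * p + j) = u3 ε ℓ x0 (n + j)) :
    (m : ℝ) / p ≤ 8 / (c * c) + 2 := by
  obtain ⟨P, q, hq1, hq2, hD⟩ := displacement_form (ε := ε) (ℓ := ℓ) (x0 := x0) n p
  set D : ℝ := P - q * ε with hDdef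
  have hpr : (0 : ℝ) < p := by exact_mod_cast hp
  have hqr : (0 : ℝ) < q := by exact_mod_cast (lt_of_lt_of_le hp hq1)
  have hDlow : c / (2 * p) ≤ |D| := by
    have h2 := hbad q P (by omega)
    rw [abs_sub_comm] at h2
    refine le_trans (div_le_div_of_nonneg_left hc.le hqr ?_) h2
    exact_mod_cast hq2
  obtain ⟨k, hk⟩ : ∃ k, m / p = k + 1 := by
    have : 1 ≤ m / p := (Nat.one_le_div_iff hp).mpr hpm
    exact ⟨m / p - 1, by omega⟩
  have hkm : (k + 1) * p ≤ m := hk ▸ Nat.div_mul_le_self m p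
  have hmk : m < (k + 2) * p := by
    have := Nat.lt_mul_of_div_lt (show m / p < k + 2 by omega) hp
    exact this
  have hblock : ∀ a j, a ≤ k → j < p → u3 ε ℓ x0 (n + a * p + j) = u3 ε ℓ x0 (n + j) := by
    intro a j ha hj
    apply hper
    nlinarith
  have hprog : ∀ a, a ≤ k → (T3 ε ℓ)^[n + a * p] x0 = (T3 ε ℓ)^[n] x0 + a * D := by
    intro a
    induction a with
    | zero => intro _; simp
    | succ a ih =>
      intro ha
      have h2 := displacement_congr (ε := ε) (ℓ := ℓ) (x0 := x0) (n + a * p) n p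
        (fun j hj => hblock a j (by omega) hj)
      rw [hD, ih (by omega)] at h2
      rw [show n + (a + 1) * p = n + a * p + p by ring]
      push_cast
      linear_combination h2
  have hlast := hprog k le_rfl
  have hfl := floor_agree hlε hlε' hl1 hx0 p (n + k * p) n
    (fun j hj => hblock k j le_rfl hj)
  have hgap : |(T3 ε ℓ)^[n + k * p] x0 - (T3 ε ℓ)^[n] x0| ≤ 4 / (c * p) := by
    rcases le_total ((T3 ε ℓ)^[n + k * p] x0) ((T3 ε ℓ)^[n] x0) with h | h
    · rw [abs_of_nonpos (by linarith), neg_sub]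
      exact gap_bound hc hbad hp hfl
    · rw [abs_of_nonneg (by linarith)]
      exact gap_bound hc hbad hp (fun t ht => (hfl t ht).symm)
  rw [hlast, add_sub_cancel_left, abs_mul, abs_of_nonneg (by positivity : (0 : ℝ) ≤ k)] at hgap
  have hkc : (k : ℝ) ≤ 8 / (c * c) := by
    have h2 : (k : ℝ) * (c / (2 * p)) ≤ 4 / (c * p) :=
      (mul_le_mul_of_nonneg_left hDlow (by positivity)).trans hgap
    rw [mul_div_assoc', div_le_div_iff₀ (by positivity) (by positivity)] at h2
    rw [le_div_iff₀ (by positivity)]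
    have h3 : (k * (c * c)) * (p : ℝ) ≤ 8 * p := by nlinarith
    exact le_of_mul_le_mul_right h3 hpr
  have hmr : (m : ℝ) ≤ (k + 2) * p := by exact_mod_cast hmk.le
  calc (m : ℝ) / p ≤ k + 2 := by rwa [div_le_iff₀ hpr]
    _ ≤ _ := by linarith

/-! ### Long repetitions from good approximations -/

/-- Two points both carried over an integer by the same small shift are close modulo `1`. -/
lemma close_of_floor_ne {X Y η : ℝ} (hη : |η| < 1) (hX : ⌊X + η⌋ ≠ ⌊X⌋) (hY : ⌊Y + η⌋ ≠ ⌊Y⌋) :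
    ∃ k : ℤ, |X - Y - k| < |η| := by
  refine ⟨⌊X⌋ - ⌊Y⌋, ?_⟩
  have hfr : X - Y - ((⌊X⌋ - ⌊Y⌋ : ℤ) : ℝ) = Int.fract X - Int.fract Y := by
    unfold Int.fract; push_cast; ring
  rw [hfr]
  have x0 := Int.fract_nonneg X
  have x1 := Int.fract_lt_one X
  have y0 := Int.fract_nonneg Y
  have y1 := Int.fract_lt_one Y
  have key : ∀ Z : ℝ, ⌊Z + η⌋ ≠ ⌊Z⌋ → Int.fract Z + η < 0 ∨ 1 ≤ Int.fract Z + η := by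
    intro Z hZ
    by_contra hcon
    push Not at hcon
    apply hZ
    rw [Int.floor_eq_iff]
    have := Int.floor_add_fract Z
    constructor <;> linarith [hcon.1, hcon.2]
  obtain ⟨e1, e2⟩ := abs_lt.mp hη
  rcases le_total 0 η with h | h
  · rw [abs_of_nonneg h, abs_lt]
    rcases key X hX with a | a <;> rcases key Y hY with b | b <;> constructor <;> linarith
  · rw [abs_of_nonpos h, abs_lt]
    rcases key X hX with a | a <;> rcases key Y hY with b | b <;> constructor <;> linarith

lemma fract_lt_iff_floor (X d : ℝ) : Int.fract X < d ↔ ⌊X - d⌋ < ⌊X⌋ := by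
  rw [Int.floor_lt]
  unfold Int.fract
  constructor <;> intro h <;> linarith

/-- The points of the circle at which the coding by the intervals changes. -/
noncomputable def thr (ε ℓ : ℝ) : Fin 4 → ℝ := ![0, ℓ - 1 + ε, ε, ℓ]

/-- Among five consecutive windows of length `W` in `[0, q_{n+1})`, one contains no time at which
the shift by `q_n` rotation steps crosses a threshold. -/
lemma exists_good_window {ε : ℝ} (hirr : Irrational ε) (h0 : 0 < ε) (h1 : ε < 1) (ℓ x0 : ℝ)
    (n W : ℕ) (hW : 5 * W ≤ qq ε (n+2)) :
    ∃ s : ℕ, ∀ t, s ≤ t → t < s + W → ∀ d : Fin 4,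
      ⌊x0 - t * ε - thr ε ℓ d + (pp ε (n+1) - qq ε (n+1) * ε)⌋ = ⌊x0 - t * ε - thr ε ℓ d⌋ := by
  by_contra hcon
  push Not at hcon
  set η : ℝ := pp ε (n+1) - qq ε (n+1) * ε with hη
  have habs : |η| = err ε (n+1) := by
    have e := qq_mul_sub_pp hirr h0 h1 (n+1)
    rw [hη, abs_sub_comm, e, abs_mul, abs_pow, abs_neg, abs_one, one_pow, one_mul,
      abs_of_pos (err_pos hirr h0 h1 _)]
  have hlt : |η| < 1 := habs ▸ err_succ_lt_one hirr h0 h1 n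
  choose t ht1 ht2 d hd using fun i : Fin 5 => hcon (i * W)
  obtain ⟨i, j, hij, hdij⟩ := Fintype.exists_ne_map_eq_of_card_lt d (by simp)
  wlog hlt' : i < j generalizing i j
  · exact this j i hij.symm hdij.symm (lt_of_le_of_ne (not_lt.mp hlt') hij.symm)
  have hi : (i : ℕ) + 1 ≤ j := hlt'
  have hj : (j : ℕ) + 1 ≤ 5 := j.2
  have hm1 := Nat.mul_le_mul_right W hi
  have hm2 := Nat.mul_le_mul_right W hj
  have a1 := ht2 i
  have a2 := ht1 j
  have a3 := ht2 j
  have hd' := hd j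
  rw [← hdij] at hd'
  obtain ⟨k, hk⟩ := close_of_floor_ne hlt (hd i) hd'
  rw [add_mul, one_mul] at hm1 hm2
  have hW' : 5 * W ≤ qq ε (n + 1 + 1) := hW
  have hb := best_approx hirr h0 h1 (n+1) (t j - t i) k (by omega) (by omega)
  rw [Nat.cast_sub (by omega)] at hb
  rw [habs] at hk
  refine absurd hk (not_lt.mpr (hb.trans (le_of_eq ?_)))
  congr 1
  ring

/-- A partial quotient of size at least `10 (M + 1)` yields a repetition of exponent at least `M`. -/
lemma exists_repetition {ε ℓ x0 : ℝ} (hirr : Irrational ε) (h0 : 0 < ε) (h1 : ε < 1)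
    (hlε : ε < ℓ) (hlε' : 1 - ε < ℓ) (hl1 : ℓ < 1) (hx0 : x0 ∈ Set.Ico 0 ℓ)
    (n M : ℕ) (hM : 1 ≤ M) (hcf : 5 * (2 * M + 2) ≤ cfa ε n) :
    (((M : ℝ) : ℝ) : EReal) ≤ wordIndex (u3 ε ℓ x0) := by
  set q := qq ε (n+1) with hq
  have hqpos : 1 ≤ q := qq_pos hirr h0 h1 n
  obtain ⟨s, hs⟩ := exists_good_window hirr h0 h1 ℓ x0 n ((2 * M + 2) * q) (by
    simp only [qq]
    have := Nat.mul_le_mul_right q hcf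
    rw [← hq]
    nlinarith)
  rw [← hq] at hs
  set W := (2 * M + 2) * q with hWdef
  -- inside the window every threshold comparison is invariant under `t ↦ t + q`
  have hcmp : ∀ t, s ≤ t → t < s + W → ∀ d : Fin 4,
      (Int.fract (x0 - (t + q : ℕ) * ε) < thr ε ℓ d ↔ Int.fract (x0 - t * ε) < thr ε ℓ d) := by
    intro t ht1 ht2 d
    have e := hs t ht1 ht2
    have e' : ∀ d : Fin 4, ⌊x0 - (t + q : ℕ) * ε - thr ε ℓ d⌋ =
        ⌊x0 - t * ε - thr ε ℓ d⌋ - pp ε (n+1) := by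
      intro d
      rw [← e d, ← Int.floor_sub_intCast]
      congr 1
      push_cast
      ring
    have z1 := e' 0
    have z2 := e' d
    simp only [thr, Matrix.cons_val_zero, sub_zero] at z1
    rw [fract_lt_iff_floor, fract_lt_iff_floor, z2, z1]
    omega
  have hcode : ∀ t, s ≤ t → t < s + W →
      code3 ε ℓ (Int.fract (x0 - (t + q : ℕ) * ε)) = code3 ε ℓ (Int.fract (x0 - t * ε)) := by
    intro t ht1 ht2
    have c1 := hcmp t ht1 ht2 1
    have c2 := hcmp t ht1 ht2 2
    simp only [thr, Matrix.cons_val] at c1 c2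
    unfold code3
    simp only [c1, c2]
  have horb := orbit_eq_fract hlε hlε' hl1 hx0
  obtain ⟨i', hi1, hi2⟩ := exists_rt_between (ε := ε) (ℓ := ℓ) (x0 := x0) s
  obtain ⟨i, hi, hii'⟩ : ∃ i, s < rt ε ℓ x0 i ∧ rt ε ℓ x0 i ≤ s + 2 :=
    ⟨i' + 1, hi2, by have := (rt_succ_bounds (ε := ε) (ℓ := ℓ) (x0 := x0) i').2; omega⟩
  have hWbig : 2 * M + 2 ≤ W := Nat.le_mul_of_pos_right _ hqpos
  -- the shifted time `rt i + q` is again a visit to `[0, ℓ)`, which defines the period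
  obtain ⟨i2, hi2'⟩ : ∃ k, rt ε ℓ x0 k = rt ε ℓ x0 i + q := by
    apply exists_rt_eq hlε hlε' hl1 hx0
    have h3 := hcmp (rt ε ℓ x0 i) hi.le (by omega) 3
    simp only [thr, Matrix.cons_val] at h3
    rw [h3, ← horb]
    exact (orbit_mem hlε hlε' hl1 hx0 i).2
  have hii2 : i < i2 := by
    by_contra hle
    have := (rt_add_bounds (ε := ε) (ℓ := ℓ) (x0 := x0) i2 (i - i2)).1
    rw [show i2 + (i - i2) = i by omega] at this
    omega
  obtain ⟨p, rfl⟩ : ∃ p, i2 = i + p := ⟨i2 - i, by omega⟩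
  have hp : 0 < p := by omega
  have hpq : p ≤ q := by
    have := (rt_add_bounds (ε := ε) (ℓ := ℓ) (x0 := x0) i p).1
    omega
  have hletter : ∀ j, rt ε ℓ x0 (i + j + p) = rt ε ℓ x0 (i + j) + q →
      rt ε ℓ x0 (i + j) < s + W → u3 ε ℓ x0 (i + j + p) = u3 ε ℓ x0 (i + j) := by
    intro j hj hlt
    rw [u3_eq_code3, u3_eq_code3, horb, horb, hj]
    refine hcode _ ?_ hlt
    have := (rt_add_bounds (ε := ε) (ℓ := ℓ) (x0 := x0) i j).1
    omega
  have hwin : ∀ j, j < M * q → rt ε ℓ x0 (i + j) < s + W := by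
    intro j hj
    have := (rt_add_bounds (ε := ε) (ℓ := ℓ) (x0 := x0) i j).2
    have hW' : W = 2 * (M * q) + 2 * q := by rw [hWdef]; ring
    omega
  have hshift : ∀ j, j ≤ M * q → rt ε ℓ x0 (i + j + p) = rt ε ℓ x0 (i + j) + q := by
    intro j
    induction j with
    | zero => intro _; exact hi2'
    | succ j ih =>
      intro hj
      have r := ih (by omega)
      have l := hletter j r (hwin j (by omega))
      rw [show i + (j + 1) + p = (i + j + p) + 1 by ring, ← add_assoc]
      simp only [rt]
      rw [r, l]
      ring
  have hle := le_wordIndex (u3 ε ℓ x0) i p (M * q) hp (hpq.trans (Nat.le_mul_of_pos_left _ hM))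
    (fun j hj => hletter j (hshift j (by omega)) (hwin j (by omega)))
  refine le_trans ?_ hle
  rw [EReal.coe_le_coe_iff]
  have hpr : (0 : ℝ) < p := by exact_mod_cast hp
  rw [le_div_iff₀ hpr]
  push_cast
  have : (p : ℝ) ≤ q := by exact_mod_cast hpq
  gcongr


/-- a 3iet word has finite index iff the partial quotients of `ε` are bounded. -/
theorem threeIet_finite_index_iff_bounded_partial_quotients
    (ε ℓ x0 : ℝ) (hirr : Irrational ε) (h0 : 0 < ε) (h1 : ε < 1)
    (hl : max ε (1 - ε) < ℓ) (hl1 : ℓ < 1) (hx0 : x0 ∈ Set.Ico 0 ℓ) :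
    wordIndex (u3 ε ℓ x0) < ⊤ ↔ ∃ K : ℕ, ∀ n : ℕ, cfa ε n ≤ K := by
  obtain ⟨hlε, hlε'⟩ := max_lt_iff.mp hl
  constructor
  · intro hfin
    by_contra hcon
    push Not at hcon
    refine absurd hfin (not_lt.mpr (le_of_eq ?_))
    symm
    rw [EReal.eq_top_iff_forall_lt]
    intro y
    obtain ⟨M, hM⟩ := exists_nat_gt (max y 1)
    obtain ⟨n, hn⟩ := hcon (5 * (2 * M + 2))
    obtain ⟨hM1, hM2⟩ := max_lt_iff.mp hM
    refine lt_of_lt_of_le (EReal.coe_lt_coe_iff.mpr hM1)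
      (exists_repetition hirr h0 h1 hlε hlε' hl1 hx0 n M ?_ hn.le)
    exact_mod_cast hM2.le
  · rintro ⟨K, hK⟩
    obtain ⟨c, hc, hbad⟩ := badly_approximable hirr h0 h1 K hK
    refine lt_of_le_of_lt (wordIndex_le _ (8 / (c * c) + 2) ?_) (EReal.coe_lt_top _)
    intro n p m hp hpm hper
    exact power_bound hlε hlε' hl1 hx0 hc hbad n p m hp hpm hper
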